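/- Suppose a₁ ≠ 0 and D := a₂² − 4a₁b ≥ 0, and let p₋ = ((−a₂−√D)/(2a₁), b₁(−a₂−√D)/(2a₁), 0). Then the characteristic polynomial of the Jacobian of the Chua system at p₋ satisfies det(λ·I − J(p₋)) = [(λ² − b₂·λ + 1)·(2a₁·λ + a·(a₂² + a₂·√D − 4a₁b)) + 2a·a₁·b₁·λ] / (2a₁). -/

import Mathlib

open Polynomial

/-!
The characteristic polynomial depends on the point only through the upper-left entry
`a (-b - 2 a₂ x - 3 a₁ x²)` of the Jacobian. At an equilibrium with `a₁ x² + a₂ x + b = 0` this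
entry is the affine expression `a (a₂ x + 2 b)`, into which the quadratic formula for `x` is
substituted.
-/

section CommRing

variable {R : Type*} [CommRing R] (a a₁ a₂ b b₁ b₂ : R)

/-- The Jacobian matrix of the Chua vector field
`(a (z - b x - a₂ x² - a₁ x³), -z, -b₁ x + y + b₂ z)` at a point with first coordinate `x`; the
other two coordinates do not enter. -/
def chuaJacobian (x : R) : Matrix (Fin 3) (Fin 3) R :=
  !![a * (-b - 2 * a₂ * x - 3 * a₁ * x ^ 2), 0, a;
    0, 0, -1;
    -b₁, 1, b₂]

theorem charpoly_chuaJacobian (x : R) :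
    (chuaJacobian a a₁ a₂ b b₁ b₂ x).charpoly =
      (X ^ 2 - C b₂ * X + 1) * (X - C (a * (-b - 2 * a₂ * x - 3 * a₁ * x ^ 2))) +
        C (a * b₁) * X := by
  rw [chuaJacobian]
  generalize a * (-b - 2 * a₂ * x - 3 * a₁ * x ^ 2) = m
  have charmatrix_eq : (!![m, 0, a; 0, 0, -1; -b₁, 1, b₂]).charmatrix =
      !![X - C m, 0, -C a; 0, X, 1; C b₁, -1, X - C b₂] := by
    ext1 i j
    fin_cases i <;> fin_cases j <;> simp
  rw [Matrix.charpoly, charmatrix_eq, Matrix.det_fin_three]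
  simp only [Matrix.of_apply, Matrix.cons_val, C_mul]
  ring

theorem charpoly_chuaJacobian_of_quadratic_eq_zero {x : R}
    (hx : a₁ * (x * x) + a₂ * x + b = 0) :
    (chuaJacobian a a₁ a₂ b b₁ b₂ x).charpoly =
      (X ^ 2 - C b₂ * X + 1) * (X - C (a * (a₂ * x + 2 * b))) + C (a * b₁) * X := by
  have entry_eq : a * (-b - 2 * a₂ * x - 3 * a₁ * x ^ 2) = a * (a₂ * x + 2 * b) := by
    linear_combination -3 * a * hx
  rw [charpoly_chuaJacobian, entry_eq]

end CommRing

theorem chua_charpoly_pminus_general {K : Type*} [Field K] [NeZero (2 : K)]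
    (a a₁ a₂ b b₁ b₂ s : K) (ha₁ : a₁ ≠ 0) (hs : s ^ 2 = a₂ ^ 2 - 4 * a₁ * b) :
    (chuaJacobian a a₁ a₂ b b₁ b₂ ((-a₂ - s) / (2 * a₁))).charpoly =
      C ((2 * a₁)⁻¹) *
        ((X ^ 2 - C b₂ * X + 1) *
            (C (2 * a₁) * X + C (a * (a₂ ^ 2 + a₂ * s - 4 * a₁ * b))) +
          C (2 * a * a₁ * b₁) * X) := by
  have two_mul_ne_zero : 2 * a₁ ≠ 0 := mul_ne_zero two_ne_zero ha₁
  have discrim_eq : discrim a₁ a₂ b = s * s := by rw [discrim, ← hs, sq]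
  have root := (quadratic_eq_zero_iff ha₁ discrim_eq ((-a₂ - s) / (2 * a₁))).2 (.inr rfl)
  have entry_eq : a * (a₂ * ((-a₂ - s) / (2 * a₁)) + 2 * b) =
      -((2 * a₁)⁻¹ * (a * (a₂ ^ 2 + a₂ * s - 4 * a₁ * b))) := by
    field_simp
    ring
  have coupling_eq : a * b₁ = (2 * a₁)⁻¹ * (2 * a * a₁ * b₁) := by field_simp
  have inv_mul_C : (C (2 * a₁)⁻¹ * C (2 * a₁) : K[X]) = 1 := by
    rw [← C_mul, inv_mul_cancel₀ two_mul_ne_zero, C_1]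
  rw [charpoly_chuaJacobian_of_quadratic_eq_zero _ _ _ _ _ _ root, entry_eq, coupling_eq,
    C_neg, C_mul (a := (2 * a₁)⁻¹), C_mul (a := (2 * a₁)⁻¹)]
  linear_combination -(X ^ 2 - C b₂ * X + 1) * X * inv_mul_C

/-- For `a₁ ≠ 0` and `D := a₂² − 4a₁b ≥ 0`, the characteristic polynomial
`det(λI − J(p₋))` of the Jacobian
`J(x,y,z) = [[a(−b − 2a₂x − 3a₁x²), 0, a], [0, 0, −1], [−b₁, 1, b₂]]` of the Chua system
at `p₋ = ((−a₂−√D)/(2a₁), b₁(−a₂−√D)/(2a₁), 0)` equals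
`[(λ² − b₂λ + 1)(2a₁λ + a(a₂² + a₂√D − 4a₁b)) + 2aa₁b₁λ]/(2a₁)`. -/
theorem chua_charpoly_pminus (a a₁ a₂ b b₁ b₂ : ℝ) (ha₁ : a₁ ≠ 0)
    (hD : a₂ ^ 2 - 4 * a₁ * b ≥ 0) :
    (!![a * (-b - 2 * a₂ * ((-a₂ - Real.sqrt (a₂ ^ 2 - 4 * a₁ * b)) / (2 * a₁)) -
            3 * a₁ * ((-a₂ - Real.sqrt (a₂ ^ 2 - 4 * a₁ * b)) / (2 * a₁)) ^ 2), 0, a;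
        0, 0, -1;
        -b₁, 1, b₂] : Matrix (Fin 3) (Fin 3) ℝ).charpoly =
      C ((2 * a₁)⁻¹) *
        ((X ^ 2 - C b₂ * X + 1) *
            (C (2 * a₁) * X +
              C (a * (a₂ ^ 2 + a₂ * Real.sqrt (a₂ ^ 2 - 4 * a₁ * b) - 4 * a₁ * b))) +
          C (2 * a * a₁ * b₁) * X) :=
  chua_charpoly_pminus_general a a₁ a₂ b b₁ b₂ _ ha₁ (Real.sq_sqrt hD)
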